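/- Let (L₁, L₂, P, (⊛ᵢ, ↙ⁱ, ↖ᵢ)_{i∈I}) be a multi-adjoint property-oriented frame, (X, Y, φ, τ) a context of this frame, and φ*, φ_* the associated operators. The multi-adjoint property-oriented concept lattice K = { (μ, λ) ∈ (X → L₁) × (Y → L₂) ∣ φ* λ = μ and φ_* μ = λ }, ordered by (μ₁, λ₁) ≤ (μ₂, λ₂) ⇔ λ₁ ≤ λ₂ pointwise, is a complete lattice, and the second projection (μ, λ) ↦ λ is an order isomorphism from K onto the complete lattice Fix(φ_*∘φ*) = { λ : Y → L₂ ∣ φ_*(φ* λ) = λ } with the pointwise order. -/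

import Mathlib

/-- The multi-adjoint property-oriented concept lattice of a context: pairs
`(μ, lam)` with `φ* lam = μ` and `φ_* μ = lam`. -/
abbrev MAPropConceptLattice {L₁ L₂ : Type*} {X Y : Type*}
    (star : (Y → L₂) → X → L₁) (lstar : (X → L₁) → Y → L₂) : Type _ :=
  {p : (X → L₁) × (Y → L₂) // star p.2 = p.1 ∧ lstar p.1 = p.2}

/-- Concepts are ordered by comparing their second components (pointwise). -/
instance {L₁ L₂ : Type*} [Preorder L₂] {X Y : Type*}
    (star : (Y → L₂) → X → L₁) (lstar : (X → L₁) → Y → L₂) :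
    LE (MAPropConceptLattice star lstar) :=
  ⟨fun p q => p.1.2 ≤ q.1.2⟩

/-- The multi-adjoint property-oriented concept lattice, ordered
by second components, is a complete lattice, and the second projection is an
order isomorphism onto the fixed points of `φ_* ∘ φ*` with the pointwise
order. -/
theorem stmt_12 {L₁ L₂ P : Type*} [CompleteLattice L₁] [CompleteLattice L₂]
    [CompleteLattice P] {I : Type*}
    (w : I → P → L₂ → L₁) (ld : I → L₁ → L₂ → P) (lu : I → L₁ → P → L₂)
    (adj : ∀ (i : I) (z : P) (y : L₂) (x : L₁),
      (w i z y ≤ x ↔ z ≤ ld i x y) ∧ (w i z y ≤ x ↔ y ≤ lu i x z))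
    {X Y : Type*} (φ : X → Y → P) (τ : Y → I)
    (star : (Y → L₂) → X → L₁) (lstar : (X → L₁) → Y → L₂)
    (hstar : ∀ (lam : Y → L₂) (x : X), star lam x = ⨆ y, w (τ y) (φ x y) (lam y))
    (hlstar : ∀ (μ : X → L₁) (y : Y), lstar μ y = ⨅ x, lu (τ y) (μ x) (φ x y)) :
    -- the concept lattice is a complete lattice whose order is the one above
    (∃ inst : CompleteLattice (MAPropConceptLattice star lstar),
      ∀ p q : MAPropConceptLattice star lstar, inst.le p q ↔ p ≤ q) ∧
    -- the second projection is an order isomorphism onto `Fix (φ_* ∘ φ*)`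
    (∃ e : MAPropConceptLattice star lstar ≃o {lam : Y → L₂ // lstar (star lam) = lam},
      ∀ p : MAPropConceptLattice star lstar, (e p : Y → L₂) = p.1.2) := by
  have gc : ∀ (lam : Y → L₂) (μ : X → L₁), star lam ≤ μ ↔ lam ≤ lstar μ := by
    intro lam μ
    simp only [Pi.le_def, hstar, hlstar, iSup_le_iff, le_iInf_iff]
    constructor
    · intro h y x
      exact (adj _ _ _ _).2.1 (h x y)
    · intro h x y
      exact (adj _ _ _ _).2.2 (h y x)
  have gc' : GaloisConnection star lstar := gc
  have hle : ∀ p q : MAPropConceptLattice star lstar, p ≤ q ↔ p.1.2 ≤ q.1.2 :=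
    fun p q => Iff.rfl
  refine ⟨?_, ?_⟩
  · let po : PartialOrder (MAPropConceptLattice star lstar) :=
      { le := fun p q => p.1.2 ≤ q.1.2
        lt := fun p q => p.1.2 ≤ q.1.2 ∧ ¬ q.1.2 ≤ p.1.2
        lt_iff_le_not_ge := fun _ _ => Iff.rfl
        le_refl := fun p => le_refl p.1.2
        le_trans := fun p q r (h : p.1.2 ≤ q.1.2) (h' : q.1.2 ≤ r.1.2) => le_trans h h'
        le_antisymm := fun p q (h : p.1.2 ≤ q.1.2) (h' : q.1.2 ≤ p.1.2) => by
          have h2 : p.1.2 = q.1.2 := le_antisymm h h'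
          have h1 : p.1.1 = q.1.1 := by rw [← p.2.1, ← q.2.1, h2]
          exact Subtype.ext (Prod.ext h1 h2) }
    let m : Set (MAPropConceptLattice star lstar) → (Y → L₂) := fun S => ⨅ p ∈ S, p.1.2
    let si : InfSet (MAPropConceptLattice star lstar) :=
      ⟨fun S => ⟨(star (m S), lstar (star (m S))), gc'.l_u_l_eq_l _, rfl⟩⟩
    refine ⟨@completeLatticeOfInf _ po si ?_, fun p q => Iff.rfl⟩
    intro S
    constructor
    · intro p hp
      change lstar (star (m S)) ≤ p.1.2
      have h : m S ≤ p.1.2 := iInf₂_le p hp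
      calc lstar (star (m S)) ≤ lstar (star p.1.2) := gc'.monotone_u (gc'.monotone_l h)
        _ = p.1.2 := by rw [p.2.1, p.2.2]
    · intro p hp
      change p.1.2 ≤ lstar (star (m S))
      have h : p.1.2 ≤ m S := le_iInf₂ fun q hq => hp hq
      exact h.trans (gc'.le_u_l _)
  · exact ⟨{ toFun := fun p => ⟨p.1.2, by rw [p.2.1, p.2.2]⟩
             invFun := fun l => ⟨(star l.1, l.1), rfl, l.2⟩
             left_inv := fun p => Subtype.ext (Prod.ext p.2.1 rfl)
             right_inv := fun l => rfl
             map_rel_iff' := Iff.rfl }, fun p => rfl⟩
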